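/- arXiv:2312.15232 — 4 statements merged into one kernel-verified Lean document; each statement's English description precedes it below -/
import Mathlib

section
/- Let $G \subsetneq \mathbb{R}^n$ be a domain, let $\alpha > 0$ and $\beta \neq 0$ be real numbers, and define $u(x) = \alpha \, d(x, \partial G)^{\beta}$ for $x \in G$, where $d(x, \partial G)$ is the Euclidean distance from $x$ to the boundary of $G$. Then for every $s \in (0,1)$, the function $u$ satisfies the $(s, C(s))$-Harnack inequality in $G$ with $C(s) = \left(\frac{1+s}{1-s}\right)^{|\beta|}$. -/
open Metric Set

/-- A continuous function `u : G → [0,∞)` satisfies the `(s, C)`-Harnack inequality in `G`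
if for every `x ∈ G` and every `r > 0` with `B(x,r) ⊆ G`, the maximum of `u` over the closed
ball `B̄(x, s r)` is at most `C` times the minimum of `u` over that closed ball; equivalently,
`u z₁ ≤ C * u z₂` for all `z₁, z₂` in the closed ball. -/
def SatisfiesHarnack {n : ℕ} (u : EuclideanSpace ℝ (Fin n) → ℝ)
    (G : Set (EuclideanSpace ℝ (Fin n))) (s C : ℝ) : Prop :=
  ∀ x ∈ G, ∀ r > (0 : ℝ), ball x r ⊆ G →
    ∀ z₁ ∈ closedBall x (s * r), ∀ z₂ ∈ closedBall x (s * r), u z₁ ≤ C * u z₂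

/-!
If `B(x, r) ⊆ G` then `r ≤ d(x, ∂G)`, and `d(·, ∂G)` is `1`-Lipschitz, so on `B̄(x, s r)` it lies
between `(1 - s) d(x, ∂G)` and `(1 + s) d(x, ∂G)`. Hence any two of its values there have ratio at
most `(1 + s) / (1 - s)`. Since this bound is symmetric in the two points, raising it to the
power `β` costs only `|β|` in the exponent of the constant, whatever the sign of `β`.
-/

theorem rpow_le_rpow_abs_mul_rpow {a b K : ℝ} (ha : 0 < a) (hb : 0 < b) (hab : a ≤ K * b)
    (hba : b ≤ K * a) (β : ℝ) : a ^ β ≤ K ^ |β| * b ^ β := by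
  have hK : 0 < K := pos_of_mul_pos_left (ha.trans_le hab) hb.le
  rcases le_total 0 β with hβ | hβ
  · calc a ^ β ≤ (K * b) ^ β := Real.rpow_le_rpow ha.le hab hβ
      _ = K ^ |β| * b ^ β := by rw [Real.mul_rpow hK.le hb.le, abs_of_nonneg hβ]
  · calc a ^ β = K ^ |β| * (K * a) ^ β := by
          rw [Real.mul_rpow hK.le ha.le, ← mul_assoc, ← Real.rpow_add hK, abs_of_nonpos hβ,
            neg_add_cancel, Real.rpow_zero, one_mul]
      _ ≤ K ^ |β| * b ^ β := by
          gcongr ?_ * ?_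
          exact Real.rpow_le_rpow_of_nonpos hb hba hβ

section LipschitzHarnack

variable {X : Type*} [PseudoMetricSpace X] {f : X → ℝ} {x z z₁ z₂ : X} {s r : ℝ}

theorem le_one_add_mul_of_lipschitzWith_one (hf : LipschitzWith 1 f) (hs : 0 ≤ s) (hr : r ≤ f x)
    (hz : z ∈ closedBall x (s * r)) : f z ≤ (1 + s) * f x :=
  calc f z ≤ f x + dist z x := by simpa using hf.le_add_mul z x
    _ ≤ f x + s * r := by gcongr; exact hz
    _ ≤ f x + s * f x := by gcongr
    _ = (1 + s) * f x := by ring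

theorem one_sub_mul_le_of_lipschitzWith_one (hf : LipschitzWith 1 f) (hs : 0 ≤ s) (hr : r ≤ f x)
    (hz : z ∈ closedBall x (s * r)) : (1 - s) * f x ≤ f z := by
  have lipschitz : f x ≤ f z + dist x z := by simpa using hf.le_add_mul x z
  have dist_le : dist x z ≤ s * f x :=
    (mem_closedBall'.mp hz).trans (mul_le_mul_of_nonneg_left hr hs)
  linarith

theorem le_div_mul_of_lipschitzWith_one (hf : LipschitzWith 1 f) (hs : 0 ≤ s) (hs1 : s < 1)
    (hr : r ≤ f x) (hz₁ : z₁ ∈ closedBall x (s * r)) (hz₂ : z₂ ∈ closedBall x (s * r)) :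
    f z₁ ≤ (1 + s) / (1 - s) * f z₂ := by
  have one_sub_pos : 0 < 1 - s := sub_pos.mpr hs1
  calc f z₁ ≤ (1 + s) * f x := le_one_add_mul_of_lipschitzWith_one hf hs hr hz₁
    _ = (1 + s) / (1 - s) * ((1 - s) * f x) := by field_simp
    _ ≤ (1 + s) / (1 - s) * f z₂ := by
      gcongr
      exact one_sub_mul_le_of_lipschitzWith_one hf hs hr hz₂

theorem rpow_le_div_rpow_abs_mul_of_lipschitzWith_one (hf : LipschitzWith 1 f) (hs : 0 ≤ s)
    (hs1 : s < 1) (hr0 : 0 < r) (hr : r ≤ f x) (hz₁ : z₁ ∈ closedBall x (s * r))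
    (hz₂ : z₂ ∈ closedBall x (s * r)) (β : ℝ) :
    f z₁ ^ β ≤ ((1 + s) / (1 - s)) ^ |β| * f z₂ ^ β := by
  have pos_on_closedBall {z : X} (hz : z ∈ closedBall x (s * r)) : 0 < f z :=
    (mul_pos (sub_pos.mpr hs1) (hr0.trans_le hr)).trans_le
      (one_sub_mul_le_of_lipschitzWith_one hf hs hr hz)
  exact rpow_le_rpow_abs_mul_rpow (pos_on_closedBall hz₁) (pos_on_closedBall hz₂)
    (le_div_mul_of_lipschitzWith_one hf hs hs1 hr hz₁ hz₂)
    (le_div_mul_of_lipschitzWith_one hf hs hs1 hr hz₂ hz₁) β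

end LipschitzHarnack

theorem le_infDist_frontier_of_ball_subset {X : Type*} [PseudoMetricSpace X] {G : Set X} {x : X}
    {r : ℝ} (hG : (frontier G).Nonempty) (hball : ball x r ⊆ G) : r ≤ infDist x (frontier G) := by
  have disjoint : Disjoint (ball x r) (frontier G) :=
    disjoint_interior_frontier.mono_left (interior_maximal hball isOpen_ball)
  refine (le_infDist hG).mpr fun y hy => ?_
  simpa only [mem_ball', not_lt] using disjoint.notMem_of_mem_right hy

theorem stmt_0_general {n : ℕ} {G : Set (EuclideanSpace ℝ (Fin n))} (hG : G ≠ univ)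
    {α s : ℝ} (hα : 0 ≤ α) (β : ℝ) (hs : 0 ≤ s) (hs1 : s < 1) :
    SatisfiesHarnack (fun x => α * infDist x (frontier G) ^ β) G s
      (((1 + s) / (1 - s)) ^ |β|) := by
  intro x hx r hr hball z₁ hz₁ z₂ hz₂
  have frontier_nonempty : (frontier G).Nonempty := nonempty_frontier_iff.mpr ⟨⟨x, hx⟩, hG⟩
  calc α * infDist z₁ (frontier G) ^ β
      ≤ α * (((1 + s) / (1 - s)) ^ |β| * infDist z₂ (frontier G) ^ β) := by
        gcongr
        exact rpow_le_div_rpow_abs_mul_of_lipschitzWith_one (lipschitz_infDist_pt (frontier G))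
          hs hs1 hr (le_infDist_frontier_of_ball_subset frontier_nonempty hball) hz₁ hz₂ β
    _ = ((1 + s) / (1 - s)) ^ |β| * (α * infDist z₂ (frontier G) ^ β) := mul_left_comm ..

/-- For a domain `G ⊊ ℝⁿ`, `α > 0`, `β ≠ 0`, the function
`u(x) = α · d(x, ∂G)^β` satisfies the `(s, C(s))`-Harnack inequality in `G` with
`C(s) = ((1+s)/(1-s))^{|β|}`, for every `s ∈ (0,1)`. -/
theorem stmt_0 {n : ℕ} (G : Set (EuclideanSpace ℝ (Fin n)))
    (hGopen : IsOpen G) (hGconn : IsConnected G) (hGne : G ≠ univ)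
    (α β : ℝ) (hα : 0 < α) (hβ : β ≠ 0) (s : ℝ) (hs : s ∈ Ioo (0 : ℝ) 1) :
    SatisfiesHarnack (fun x => α * Metric.infDist x (frontier G) ^ β) G s
      (((1 + s) / (1 - s)) ^ |β|) :=
  stmt_0_general hGne hα.le β hs.1.le hs.2
end

section
/- Let $s \in (0,1)$, $C \geq 1$, and let $u : \mathbb{B}^n \to (0,\infty)$ be a continuous function satisfying the $(s, C)$-Harnack inequality in the unit ball $\mathbb{B}^n$. Then for all $x, y \in \mathbb{B}^n$, $u(x) \leq C^{1+t}\, u(y)$, where $t = \frac{\log((1+r)/(1-r))}{\log((1+s)/(1-s))}$ and $r = \tanh(\rho_{\mathbb{B}^n}(x,y)/2)$, with $\rho_{\mathbb{B}^n}$ the hyperbolic distance of the unit ball. -/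
open Metric Set

/-- The hyperbolic distance of the unit ball `𝔹ⁿ`, determined by
`sinh²(ρ(x,y)/2) = |x-y|² / ((1-|x|²)(1-|y|²))`. -/
noncomputable def rhoB {n : ℕ} (x y : EuclideanSpace ℝ (Fin n)) : ℝ :=
  2 * Real.arsinh (‖x - y‖ / Real.sqrt ((1 - ‖x‖ ^ 2) * (1 - ‖y‖ ^ 2)))

/-!
Embed the ball in the hyperboloid model, where `cosh` of the distance is the Lorentzian form: there
geodesics are explicit linear combinations, so any two points at distance `a + b` have a point at
distances exactly `a` and `b` from them. A hyperbolic ball of radius `R = artanh s` is a Euclidean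
ball contained in some closed ball of center `c` and radius `s * (1 - ‖c‖)`, so the Harnack
inequality costs one factor `C` for two points at hyperbolic distance at most `2 * R`. Cutting the
geodesic from `x` to `y` into `⌈ρ(x, y) / (2 * R)⌉ ≤ 1 + t` equal pieces gives the bound.
-/

open Real

section HyperbolicDistance

variable {E : Type*} [NormedAddCommGroup E] {x y : E}

/-- The hyperbolic distance of the open unit ball of a real inner product space; on
`EuclideanSpace ℝ (Fin n)` it is `rhoB`, by definition. It is junk outside the open unit ball. -/
noncomputable def hypDist (x y : E) : ℝ :=
  2 * arsinh (‖x - y‖ / √((1 - ‖x‖ ^ 2) * (1 - ‖y‖ ^ 2)))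

theorem one_sub_norm_sq_pos (hx : ‖x‖ < 1) : 0 < 1 - ‖x‖ ^ 2 :=
  sub_pos.2 (pow_lt_one₀ (norm_nonneg x) hx two_ne_zero)

theorem hypDist_nonneg (x y : E) : 0 ≤ hypDist x y :=
  mul_nonneg zero_le_two (arsinh_nonneg_iff.2 (by positivity))

theorem hypDist_self (x : E) : hypDist x x = 0 := by
  simp [hypDist]

theorem hypDist_comm (x y : E) : hypDist x y = hypDist y x := by
  rw [hypDist, hypDist, norm_sub_rev, mul_comm (1 - ‖x‖ ^ 2)]

theorem eq_of_hypDist_eq_zero (hx : ‖x‖ < 1) (hy : ‖y‖ < 1) (h : hypDist x y = 0) : x = y := by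
  have hpos := mul_pos (one_sub_norm_sq_pos hx) (one_sub_norm_sq_pos hy)
  simpa [hypDist, (sqrt_pos.2 hpos).ne', sub_eq_zero] using h

theorem cosh_hypDist (hx : ‖x‖ < 1) (hy : ‖y‖ < 1) :
    cosh (hypDist x y) = 1 + 2 * ‖x - y‖ ^ 2 / ((1 - ‖x‖ ^ 2) * (1 - ‖y‖ ^ 2)) := by
  have hpos := mul_pos (one_sub_norm_sq_pos hx) (one_sub_norm_sq_pos hy)
  rw [hypDist, cosh_two_mul, cosh_sq, sinh_arsinh, div_pow, sq_sqrt hpos.le]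
  ring

end HyperbolicDistance

section HyperboloidModel

/-- The point of the geodesic of the hyperboloid `B Z Z = 1` at distance `a` from `X` and `b`
from `Y`, where `B X Y = cosh (a + b)`. It is meaningless when `a + b = 0`. -/
noncomputable def geodesicPoint {V : Type*} [AddCommGroup V] [Module ℝ V] (a b : ℝ) (X Y : V) : V :=
  (sinh b / sinh (a + b)) • X + (sinh a / sinh (a + b)) • Y

section BilinForm

variable {V : Type*} [AddCommGroup V] [Module ℝ V] {B : LinearMap.BilinForm ℝ V} {X Y : V} {a b : ℝ}

theorem bilin_left_geodesicPoint (hX : B X X = 1) (hXY : B X Y = cosh (a + b))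
    (hab : sinh (a + b) ≠ 0) : B X (geodesicPoint a b X Y) = cosh a := by
  have sinh_b : sinh b = sinh (a + b) * cosh a - cosh (a + b) * sinh a := by
    rw [← sinh_sub, add_sub_cancel_left]
  simp only [geodesicPoint, map_add, map_smul, smul_eq_mul, hX, hXY]
  field_simp
  linear_combination sinh_b

theorem bilin_geodesicPoint_right (hY : B Y Y = 1) (hXY : B X Y = cosh (a + b))
    (hab : sinh (a + b) ≠ 0) : B (geodesicPoint a b X Y) Y = cosh b := by
  have sinh_a : sinh a = sinh (a + b) * cosh b - cosh (a + b) * sinh b := by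
    rw [← sinh_sub, add_sub_cancel_right]
  simp only [geodesicPoint, map_add, map_smul, LinearMap.add_apply, LinearMap.smul_apply,
    smul_eq_mul, hY, hXY]
  field_simp
  linear_combination sinh_a

theorem bilin_geodesicPoint_self (hB : B.IsSymm) (hX : B X X = 1) (hY : B Y Y = 1)
    (hXY : B X Y = cosh (a + b)) (hab : sinh (a + b) ≠ 0) :
    B (geodesicPoint a b X Y) (geodesicPoint a b X Y) = 1 := by
  set Z := geodesicPoint a b X Y
  have hZX : B Z X = cosh a := (hB.eq Z X).trans (bilin_left_geodesicPoint hX hXY hab)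
  have hZY : B Z Y = cosh b := bilin_geodesicPoint_right hY hXY hab
  calc B Z Z = B Z ((sinh b / sinh (a + b)) • X + (sinh a / sinh (a + b)) • Y) := rfl
    _ = sinh b / sinh (a + b) * B Z X + sinh a / sinh (a + b) * B Z Y := by
        simp only [map_add, map_smul, smul_eq_mul]
    _ = (sinh a * cosh b + cosh a * sinh b) / sinh (a + b) := by rw [hZX, hZY]; ring
    _ = 1 := by rw [← sinh_add, div_self hab]

end BilinForm

/-- The Lorentzian form `X₀ Y₀ - ⟪X₁, Y₁⟫` on `ℝ × E`, with time coordinate first; it carries the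
hyperboloid model of hyperbolic space. -/
noncomputable def lorentzForm (E : Type*) [NormedAddCommGroup E] [InnerProductSpace ℝ E] :
    LinearMap.BilinForm ℝ (ℝ × E) :=
  (LinearMap.mul ℝ ℝ).compl₁₂ (LinearMap.fst ℝ ℝ E) (LinearMap.fst ℝ ℝ E) -
    (innerₗ E).compl₁₂ (LinearMap.snd ℝ ℝ E) (LinearMap.snd ℝ ℝ E)

/-- The isometry from the Poincaré ball model onto the upper sheet of the hyperboloid
`lorentzForm E X X = 1`: stereographic projection from `(-1, 0)`, inverted. -/
noncomputable def hyperboloidLift {E : Type*} [NormedAddCommGroup E] [NormedSpace ℝ E] (x : E) :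
    ℝ × E :=
  ((1 + ‖x‖ ^ 2) / (1 - ‖x‖ ^ 2), (2 / (1 - ‖x‖ ^ 2)) • x)

theorem hyperboloidLift_fst_nonneg {E : Type*} [NormedAddCommGroup E] [NormedSpace ℝ E] {x : E}
    (hx : ‖x‖ < 1) : 0 ≤ (hyperboloidLift x).1 :=
  div_nonneg (by positivity) (one_sub_norm_sq_pos hx).le

variable {E : Type*} [NormedAddCommGroup E] [InnerProductSpace ℝ E]

theorem lorentzForm_apply (X Y : ℝ × E) : lorentzForm E X Y = X.1 * Y.1 - inner ℝ X.2 Y.2 :=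
  rfl

theorem lorentzForm_isSymm : (lorentzForm E).IsSymm :=
  ⟨fun X Y ↦ by simp only [lorentzForm_apply, real_inner_comm, mul_comm]⟩

theorem exists_hyperboloidLift_eq {X : ℝ × E} (hX₀ : 0 ≤ X.1) (hX : lorentzForm E X X = 1) :
    ∃ z : E, ‖z‖ < 1 ∧ hyperboloidLift z = X := by
  have hX₁ : ‖X.2‖ ^ 2 = (X.1 - 1) * (X.1 + 1) := by
    rw [lorentzForm_apply, real_inner_self_eq_norm_sq] at hX
    linarith
  set z : E := (X.1 + 1)⁻¹ • X.2
  have hz : ‖z‖ ^ 2 = (X.1 - 1) / (X.1 + 1) := by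
    rw [norm_smul, mul_pow, norm_inv, inv_pow, Real.norm_eq_abs, sq_abs, hX₁]
    field_simp
  have one_sub_hz : 1 - ‖z‖ ^ 2 = 2 / (X.1 + 1) := by rw [hz]; field_simp; ring
  refine ⟨z, ?_, Prod.ext ?_ ?_⟩
  · have : 0 < 1 - ‖z‖ ^ 2 := one_sub_hz ▸ by positivity
    exact (sq_lt_one_iff₀ (norm_nonneg z)).1 (sub_pos.1 this)
  · rw [hyperboloidLift, one_sub_hz, hz]
    field_simp
    ring
  · rw [hyperboloidLift, one_sub_hz, smul_smul]
    have : 2 / (2 / (X.1 + 1)) * (X.1 + 1)⁻¹ = 1 := by field_simp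
    rw [this, one_smul]

variable {x y : E} {a b : ℝ}

theorem lorentzForm_hyperboloidLift (hx : ‖x‖ < 1) (hy : ‖y‖ < 1) :
    lorentzForm E (hyperboloidLift x) (hyperboloidLift y) = cosh (hypDist x y) := by
  have hx' := (one_sub_norm_sq_pos hx).ne'
  have hy' := (one_sub_norm_sq_pos hy).ne'
  rw [cosh_hypDist hx hy, norm_sub_sq_real, lorentzForm_apply, hyperboloidLift, hyperboloidLift,
    real_inner_smul_left, real_inner_smul_right]
  field_simp
  ring

theorem lorentzForm_hyperboloidLift_self (hx : ‖x‖ < 1) :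
    lorentzForm E (hyperboloidLift x) (hyperboloidLift x) = 1 := by
  rw [lorentzForm_hyperboloidLift hx hx, hypDist_self, cosh_zero]

theorem exists_hypDist_eq_hypDist_eq (hx : ‖x‖ < 1) (hy : ‖y‖ < 1) (ha : 0 ≤ a) (hb : 0 ≤ b)
    (hab : hypDist x y = a + b) : ∃ z : E, ‖z‖ < 1 ∧ hypDist x z = a ∧ hypDist z y = b := by
  rcases (add_nonneg ha hb).eq_or_lt with hab₀ | hab₀
  · obtain rfl := eq_of_hypDist_eq_zero hx hy (hab.trans hab₀.symm)
    exact ⟨x, hx, by rw [hypDist_self]; linarith, by rw [hypDist_self]; linarith⟩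
  set X := hyperboloidLift x
  set Y := hyperboloidLift y
  have hsinh : 0 < sinh (a + b) := sinh_pos_iff.2 hab₀
  have hX : lorentzForm E X X = 1 := lorentzForm_hyperboloidLift_self hx
  have hY : lorentzForm E Y Y = 1 := lorentzForm_hyperboloidLift_self hy
  have hXY : lorentzForm E X Y = cosh (a + b) := hab ▸ lorentzForm_hyperboloidLift hx hy
  have hZ₀ : 0 ≤ (geodesicPoint a b X Y).1 :=
    add_nonneg
      (mul_nonneg (div_nonneg (sinh_nonneg_iff.2 hb) hsinh.le) (hyperboloidLift_fst_nonneg hx))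
      (mul_nonneg (div_nonneg (sinh_nonneg_iff.2 ha) hsinh.le) (hyperboloidLift_fst_nonneg hy))
  obtain ⟨z, hz, hzZ⟩ := exists_hyperboloidLift_eq hZ₀
    (bilin_geodesicPoint_self lorentzForm_isSymm hX hY hXY hsinh.ne')
  refine ⟨z, hz, cosh_injOn (hypDist_nonneg x z) ha ?_, cosh_injOn (hypDist_nonneg z y) hb ?_⟩
  · rw [← lorentzForm_hyperboloidLift hx hz, hzZ, bilin_left_geodesicPoint hX hXY hsinh.ne']
  · rw [← lorentzForm_hyperboloidLift hz hy, hzZ, bilin_geodesicPoint_right hY hXY hsinh.ne']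

end HyperboloidModel

section HyperbolicBall

/-- The common denominator of the Euclidean center and radius of the hyperbolic ball with center
`m` and radius `R`. -/
noncomputable def hypBallScale {E : Type*} [NormedAddCommGroup E] (m : E) (R : ℝ) : ℝ :=
  1 + (cosh R - 1) * (1 - ‖m‖ ^ 2) / 2

/-- The Euclidean center of the hyperbolic ball with hyperbolic center `m` and radius `R`. -/
noncomputable def hypBallCenter {E : Type*} [NormedAddCommGroup E] [NormedSpace ℝ E] (m : E)
    (R : ℝ) : E :=
  (hypBallScale m R)⁻¹ • m

/-- The Euclidean radius of the hyperbolic ball with hyperbolic center `m` and radius `R`. -/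
noncomputable def hypBallRadius {E : Type*} [NormedAddCommGroup E] (m : E) (R : ℝ) : ℝ :=
  (1 - ‖m‖ ^ 2) * sinh R / (2 * hypBallScale m R)

section NormedSpace

variable {E : Type*} [NormedAddCommGroup E] {m : E} {R : ℝ}

theorem one_le_hypBallScale (hm : ‖m‖ < 1) (R : ℝ) : 1 ≤ hypBallScale m R := by
  have : 0 ≤ (cosh R - 1) * (1 - ‖m‖ ^ 2) :=
    mul_nonneg (sub_nonneg.2 (one_le_cosh R)) (one_sub_norm_sq_pos hm).le
  rw [hypBallScale]
  linarith

variable [NormedSpace ℝ E]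

theorem norm_hypBallCenter (hm : ‖m‖ < 1) (R : ℝ) :
    ‖hypBallCenter m R‖ = ‖m‖ / hypBallScale m R := by
  have hk : 0 ≤ hypBallScale m R := zero_le_one.trans (one_le_hypBallScale hm R)
  rw [hypBallCenter, norm_smul, norm_inv, Real.norm_of_nonneg hk, inv_mul_eq_div]

theorem norm_hypBallCenter_lt_one (hm : ‖m‖ < 1) (R : ℝ) : ‖hypBallCenter m R‖ < 1 := by
  rw [norm_hypBallCenter hm]
  exact (div_le_self (norm_nonneg m) (one_le_hypBallScale hm R)).trans_lt hm

theorem hypBallRadius_le (hm : ‖m‖ < 1) (hR : 0 ≤ R) :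
    hypBallRadius m R ≤ tanh R * (1 - ‖hypBallCenter m R‖) := by
  have hk : 0 < hypBallScale m R := zero_lt_one.trans_le (one_le_hypBallScale hm R)
  have hgap : tanh R * (1 - ‖hypBallCenter m R‖) - hypBallRadius m R =
      sinh R * (1 - ‖m‖) ^ 2 / (2 * cosh R * hypBallScale m R) := by
    rw [norm_hypBallCenter hm, hypBallRadius, tanh_eq_sinh_div_cosh]
    field_simp
    rw [hypBallScale]
    ring
  have := sinh_nonneg_iff.2 hR
  exact sub_nonneg.1 (hgap ▸ by positivity)

end NormedSpace

variable {E : Type*} [NormedAddCommGroup E] [InnerProductSpace ℝ E] {x m : E} {R : ℝ}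

theorem norm_sub_hypBallCenter_sq (x : E) (hm : ‖m‖ < 1) (R : ℝ) :
    ‖x - hypBallCenter m R‖ ^ 2 = hypBallRadius m R ^ 2 +
      (‖x - m‖ ^ 2 - (cosh R - 1) / 2 * ((1 - ‖x‖ ^ 2) * (1 - ‖m‖ ^ 2))) / hypBallScale m R := by
  have hk : hypBallScale m R ≠ 0 := (zero_lt_one.trans_le (one_le_hypBallScale hm R)).ne'
  rw [norm_sub_sq_real, norm_sub_sq_real, norm_hypBallCenter hm, hypBallCenter,
    real_inner_smul_right, hypBallRadius, div_pow _ (2 * _), mul_pow _ (sinh R), sinh_sq]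
  field_simp
  rw [hypBallScale]
  ring

theorem norm_sub_hypBallCenter_le (hx : ‖x‖ < 1) (hm : ‖m‖ < 1) (h : hypDist x m ≤ R) :
    ‖x - hypBallCenter m R‖ ≤ hypBallRadius m R := by
  have hR : 0 ≤ R := (hypDist_nonneg x m).trans h
  have hk : 0 < hypBallScale m R := zero_lt_one.trans_le (one_le_hypBallScale hm R)
  have hpos := mul_pos (one_sub_norm_sq_pos hx) (one_sub_norm_sq_pos hm)
  have hdist : ‖x - m‖ ^ 2 ≤ (cosh R - 1) / 2 * ((1 - ‖x‖ ^ 2) * (1 - ‖m‖ ^ 2)) := by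
    have hcosh : cosh (hypDist x m) ≤ cosh R :=
      cosh_strictMonoOn.monotoneOn (hypDist_nonneg x m) hR h
    rw [cosh_hypDist hx hm, ← le_sub_iff_add_le', div_le_iff₀ hpos] at hcosh
    linarith
  have hradius : 0 ≤ hypBallRadius m R :=
    div_nonneg (mul_nonneg (one_sub_norm_sq_pos hm).le (sinh_nonneg_iff.2 hR)) (by positivity)
  refine (sq_le_sq₀ (norm_nonneg _) hradius).1 ?_
  rw [norm_sub_hypBallCenter_sq x hm]
  exact add_le_of_nonpos_right (div_nonpos_of_nonpos_of_nonneg (sub_nonpos.2 hdist) hk.le)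

end HyperbolicBall

/-- The `(s, C)`-Harnack inequality in a subset of a metric space; for functions on
`EuclideanSpace ℝ (Fin n)` it is `SatisfiesHarnack`, by definition. -/
def HarnackOn {E : Type*} [PseudoMetricSpace E] (u : E → ℝ) (G : Set E) (s C : ℝ) : Prop :=
  ∀ x ∈ G, ∀ r > (0 : ℝ), ball x r ⊆ G →
    ∀ z₁ ∈ closedBall x (s * r), ∀ z₂ ∈ closedBall x (s * r), u z₁ ≤ C * u z₂

namespace HarnackOn

theorem nonneg {E : Type*} [PseudoMetricSpace E] {u : E → ℝ} {G : Set E} {s C : ℝ}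
    (hu : HarnackOn u G s C) (hG : IsOpen G) (hs : 0 ≤ s) (hC : 1 < C) {x : E} (hx : x ∈ G) :
    0 ≤ u x := by
  obtain ⟨r, hr, hball⟩ := Metric.isOpen_iff.1 hG x hx
  have hxx : x ∈ closedBall x (s * r) := mem_closedBall_self (by positivity)
  have := hu x hx r hr hball x hxx x hxx
  nlinarith

variable {E : Type*} [NormedAddCommGroup E] [InnerProductSpace ℝ E] {u : E → ℝ} {C R : ℝ} {x y : E}

-- `x` and `y` lie in the hyperbolic ball of radius `R` about their hyperbolic midpoint.
theorem le_mul_of_hypDist_le (hu : HarnackOn u (ball 0 1) (tanh R) C) (hx : ‖x‖ < 1)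
    (hy : ‖y‖ < 1) (hxy : hypDist x y ≤ 2 * R) : u x ≤ C * u y := by
  have hdist := hypDist_nonneg x y
  obtain ⟨m, hm, hxm, hmy⟩ := exists_hypDist_eq_hypDist_eq hx hy (div_nonneg hdist zero_le_two)
    (div_nonneg hdist zero_le_two) (add_halves _).symm
  have mem_closedBall_of_hypDist_le {z : E} (hz : ‖z‖ < 1) (hzm : hypDist z m ≤ R) :
      z ∈ closedBall (hypBallCenter m R) (tanh R * (1 - ‖hypBallCenter m R‖)) :=
    mem_closedBall_iff_norm.2 <|
      (norm_sub_hypBallCenter_le hz hm hzm).trans (hypBallRadius_le hm (by linarith))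
  have hcenter := norm_hypBallCenter_lt_one hm R
  exact hu (hypBallCenter m R) (mem_ball_zero_iff.2 hcenter) _ (sub_pos.2 hcenter)
    (ball_subset_ball' (by rw [dist_zero_right, sub_add_cancel]))
    x (mem_closedBall_of_hypDist_le hx (by linarith))
    y (mem_closedBall_of_hypDist_le hy (by rw [hypDist_comm]; linarith))

theorem le_pow_mul_of_hypDist_le (hu : HarnackOn u (ball 0 1) (tanh R) C) (hC : 0 ≤ C) (N : ℕ)
    (hx : ‖x‖ < 1) (hy : ‖y‖ < 1) (hxy : hypDist x y ≤ N * (2 * R)) : u x ≤ C ^ N * u y := by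
  induction N generalizing x with
  | zero =>
    rw [Nat.cast_zero, zero_mul] at hxy
    obtain rfl := eq_of_hypDist_eq_zero hx hy (hxy.antisymm (hypDist_nonneg x y))
    rw [pow_zero, one_mul]
  | succ N ih =>
    push_cast at hxy
    set a := hypDist x y / (N + 1) with ha
    have ha₀ : 0 ≤ a := div_nonneg (hypDist_nonneg x y) (by positivity)
    have haR : a ≤ 2 * R := (div_le_iff₀' (by positivity)).2 hxy
    have hsplit : hypDist x y = a + N * a := by rw [ha]; field_simp; ring
    obtain ⟨z, hz, hxz, hzy⟩ := exists_hypDist_eq_hypDist_eq hx hy ha₀ (by positivity) hsplit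
    calc u x ≤ C * u z := hu.le_mul_of_hypDist_le hx hz (hxz.trans_le haR)
      _ ≤ C * (C ^ N * u y) := by
        gcongr
        exact ih hz (hzy.trans_le (by gcongr))
      _ = C ^ (N + 1) * u y := by ring

end HarnackOn

theorem log_one_add_tanh_div_one_sub_tanh (w : ℝ) : log ((1 + tanh w) / (1 - tanh w)) = 2 * w := by
  have := artanh_eq_half_log ⟨(neg_one_lt_tanh w).le, (tanh_lt_one w).le⟩
  rw [artanh_tanh] at this
  linarith

theorem stmt_3_general {E : Type*} [NormedAddCommGroup E] [InnerProductSpace ℝ E] {s C : ℝ}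
    (hs : s ∈ Ioo (0 : ℝ) 1) (hC : 1 ≤ C) {u : E → ℝ} (hu : HarnackOn u (ball 0 1) s C) {x y : E}
    (hx : x ∈ ball (0 : E) 1) (hy : y ∈ ball (0 : E) 1) :
    u x ≤ C ^ (1 + log ((1 + tanh (hypDist x y / 2)) / (1 - tanh (hypDist x y / 2))) /
        log ((1 + s) / (1 - s))) * u y := by
  obtain ⟨R, hR, rfl⟩ : ∃ R, 0 < R ∧ tanh R = s :=
    ⟨artanh s, artanh_pos hs, tanh_artanh ⟨by linarith [hs.1], hs.2⟩⟩
  rw [log_one_add_tanh_div_one_sub_tanh, log_one_add_tanh_div_one_sub_tanh,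
    mul_div_cancel₀ _ two_ne_zero]
  set t := hypDist x y / (2 * R)
  set N := ⌈t⌉₊
  have hchain : u x ≤ C ^ N * u y :=
    hu.le_pow_mul_of_hypDist_le (zero_le_one.trans hC) N (mem_ball_zero_iff.1 hx)
      (mem_ball_zero_iff.1 hy) ((div_le_iff₀ (by positivity)).1 (Nat.le_ceil t))
  rcases hC.eq_or_lt with rfl | hC'
  · simpa using hchain
  have ht₀ : 0 ≤ t := div_nonneg (hypDist_nonneg x y) (by positivity)
  have hN : (N : ℝ) ≤ 1 + t := by linarith [Nat.ceil_lt_add_one ht₀]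
  refine hchain.trans (mul_le_mul_of_nonneg_right ?_ (hu.nonneg isOpen_ball hs.1.le hC' hy))
  rw [← rpow_natCast]
  exact rpow_le_rpow_of_exponent_le hC hN

/-- If `u : 𝔹ⁿ → (0,∞)` is continuous and satisfies the `(s, C)`-Harnack inequality in the
unit ball, then for all `x, y ∈ 𝔹ⁿ`, `u x ≤ C^(1+t) · u y` where
`t = log((1+r)/(1-r)) / log((1+s)/(1-s))` and `r = tanh(ρ_{𝔹ⁿ}(x,y)/2)`. -/
theorem stmt_3 {n : ℕ} (s C : ℝ) (hs : s ∈ Ioo (0 : ℝ) 1) (hC : 1 ≤ C)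
    (u : EuclideanSpace ℝ (Fin n) → ℝ)
    (hpos : ∀ z ∈ ball (0 : EuclideanSpace ℝ (Fin n)) 1, 0 < u z)
    (hcont : ContinuousOn u (ball (0 : EuclideanSpace ℝ (Fin n)) 1))
    (hHar : SatisfiesHarnack u (ball (0 : EuclideanSpace ℝ (Fin n)) 1) s C)
    (x y : EuclideanSpace ℝ (Fin n))
    (hx : x ∈ ball (0 : EuclideanSpace ℝ (Fin n)) 1)
    (hy : y ∈ ball (0 : EuclideanSpace ℝ (Fin n)) 1) :
    u x ≤ C ^ (1 + Real.log ((1 + Real.tanh (rhoB x y / 2)) / (1 - Real.tanh (rhoB x y / 2))) /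
        Real.log ((1 + s) / (1 - s))) * u y :=
  stmt_3_general hs hC hHar hx hy
end

section
/- Let $x \in \mathbb{B}^n$, $s \in (0,1)$, and let $y \in \mathbb{B}^n$ satisfy $|y - x| = s(1-|x|)$. Then $\rho_{\mathbb{B}^n}(x,y) \geq \log(1+s)$, where $\rho_{\mathbb{B}^n}$ is the hyperbolic distance of the unit ball. -/
open Metric Set

/-! Since `sinh (log a / 2) = (a - 1) / (2√a)`, applying `sinh` to the halves of both sides, with
`a = 1 + |x - y| / (1 - |x|)`, turns the bound into
`(1 - |x|²)(1 - |y|²) ≤ 4 (1 - |x|)(1 - |x| + |x - y|)`. This follows from `1 - r² ≤ 2 (1 - r)` for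
`r = |x|, |y|` and the triangle inequality. -/

theorem sinh_half_log {a : ℝ} (ha : 0 < a) :
    Real.sinh (Real.log a / 2) = (a - 1) / (2 * √a) := by
  have hsq : √a ^ 2 = a := Real.sq_sqrt ha.le
  rw [← Real.log_sqrt ha.le, Real.sinh_log (Real.sqrt_pos.2 ha)]
  field_simp
  rw [hsq]

theorem one_sub_sq_le_two_mul_one_sub (r : ℝ) : 1 - r ^ 2 ≤ 2 * (1 - r) := by
  linarith [sq_nonneg (1 - r)]

section SeminormedAddCommGroup

variable {E : Type*} [SeminormedAddCommGroup E] {x y : E}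

theorem one_sub_norm_sq_mul_one_sub_norm_sq_le (hx : ‖x‖ ≤ 1) (y : E) :
    (1 - ‖x‖ ^ 2) * (1 - ‖y‖ ^ 2) ≤ 4 * (1 - ‖x‖) * (1 - ‖x‖ + ‖x - y‖) := by
  have hx_sq : 0 ≤ 1 - ‖x‖ ^ 2 := sub_nonneg.2 (pow_le_one₀ (norm_nonneg x) hx)
  have htriangle : 1 - ‖y‖ ≤ 1 - ‖x‖ + ‖x - y‖ := by linarith [norm_sub_norm_le x y]
  calc (1 - ‖x‖ ^ 2) * (1 - ‖y‖ ^ 2)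
      ≤ (1 - ‖x‖ ^ 2) * (2 * (1 - ‖y‖)) := by
        gcongr
        exact one_sub_sq_le_two_mul_one_sub _
    _ ≤ (1 - ‖x‖ ^ 2) * (2 * (1 - ‖x‖ + ‖x - y‖)) := by gcongr
    _ ≤ (2 * (1 - ‖x‖)) * (2 * (1 - ‖x‖ + ‖x - y‖)) := by
        gcongr
        exact one_sub_sq_le_two_mul_one_sub _
    _ = 4 * (1 - ‖x‖) * (1 - ‖x‖ + ‖x - y‖) := by ring

theorem sqrt_one_sub_norm_sq_mul_one_sub_norm_sq_le (hx : ‖x‖ < 1) (y : E) :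
    √((1 - ‖x‖ ^ 2) * (1 - ‖y‖ ^ 2)) ≤
      (1 - ‖x‖) * (2 * √(1 + ‖x - y‖ / (1 - ‖x‖))) := by
  have hx' : 0 < 1 - ‖x‖ := sub_pos.2 hx
  refine Real.sqrt_le_iff.2 ⟨by positivity, ?_⟩
  calc (1 - ‖x‖ ^ 2) * (1 - ‖y‖ ^ 2)
      ≤ 4 * (1 - ‖x‖) * (1 - ‖x‖ + ‖x - y‖) := one_sub_norm_sq_mul_one_sub_norm_sq_le hx.le y
    _ = ((1 - ‖x‖) * (2 * √(1 + ‖x - y‖ / (1 - ‖x‖)))) ^ 2 := by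
      rw [mul_pow, mul_pow, Real.sq_sqrt (by positivity)]
      field_simp
      ring

theorem stmt_5_general (hx : ‖x‖ < 1) (hy : ‖y‖ < 1) :
    Real.log (1 + ‖x - y‖ / (1 - ‖x‖)) ≤
      2 * Real.arsinh (‖x - y‖ / √((1 - ‖x‖ ^ 2) * (1 - ‖y‖ ^ 2))) := by
  have hprod : 0 < (1 - ‖x‖ ^ 2) * (1 - ‖y‖ ^ 2) :=
    mul_pos (sub_pos.2 (pow_lt_one₀ (norm_nonneg x) hx two_ne_zero))
      (sub_pos.2 (pow_lt_one₀ (norm_nonneg y) hy two_ne_zero))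
  rw [← div_le_iff₀' two_pos, ← Real.sinh_le_sinh, Real.sinh_arsinh]
  calc Real.sinh (Real.log (1 + ‖x - y‖ / (1 - ‖x‖)) / 2)
      = ‖x - y‖ / ((1 - ‖x‖) * (2 * √(1 + ‖x - y‖ / (1 - ‖x‖)))) := by
        rw [sinh_half_log (by positivity), add_sub_cancel_left, div_div]
    _ ≤ ‖x - y‖ / √((1 - ‖x‖ ^ 2) * (1 - ‖y‖ ^ 2)) := by
        gcongr
        exact sqrt_one_sub_norm_sq_mul_one_sub_norm_sq_le hx y

end SeminormedAddCommGroup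

/-- If `x ∈ 𝔹ⁿ`, `s ∈ (0,1)` and `y ∈ 𝔹ⁿ` satisfies `|y-x| = s(1-|x|)`, then
`ρ_{𝔹ⁿ}(x,y) ≥ log(1+s)`. -/
theorem stmt_5 {n : ℕ} (x y : EuclideanSpace ℝ (Fin n)) (hx : ‖x‖ < 1) (hy : ‖y‖ < 1)
    (s : ℝ) (hs : s ∈ Ioo (0 : ℝ) 1) (hxy : ‖y - x‖ = s * (1 - ‖x‖)) :
    Real.log (1 + s) ≤ rhoB x y := by
  rw [eq_div_of_mul_eq (sub_pos.2 hx).ne' hxy.symm, norm_sub_rev]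
  exact stmt_5_general hx hy
end

section
/- For all real numbers $r, R$ with $0 < r < R$, $\int_{-\pi}^{\pi} \frac{|\cos\theta|}{R^2 + r^2 - 2rR\cos\theta}\, \mathrm{d}\theta = \frac{2(R^2+r^2)}{rR(R^2-r^2)} \arctan\left( \frac{2rR}{R^2-r^2} \right)$. -/
/-!
Folding the circle onto the half where `cos θ ≥ 0`, via `θ ↦ θ + π`, removes the absolute value and
symmetrises the integrand to `cos θ / (a - b cos θ) + cos θ / (a + b cos θ)`. Its common denominator
is `a² - b² cos² θ = c² + b² sin² θ` when `a² = b² + c²`, so a multiple of `arctan (b / c * sin θ)`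
is a primitive. The theorem is the case of the Pythagorean triple
`(R² + r²)² = (2rR)² + (R² - r²)²`.
-/

open MeasureTheory Real

theorem intervalIntegral_eq_integral_add_shift_of_periodic {E : Type*} [NormedAddCommGroup E]
    [NormedSpace ℝ E] {f : ℝ → E} {T : ℝ} (hf : Function.Periodic f (2 * T))
    (hint : ∀ x y, IntervalIntegrable f volume x y) (s t : ℝ) :
    ∫ x in s..s + 2 * T, f x = ∫ x in t..t + T, (f x + f (x + T)) := by
  have hshift : ∫ x in t + T..t + 2 * T, f x = ∫ x in t..t + T, f (x + T) := by
    rw [intervalIntegral.integral_comp_add_right, two_mul, add_assoc]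
  have hint_shift : IntervalIntegrable (fun x ↦ f (x + T)) volume t (t + T) := by
    simpa using (hint (t + T) (t + T + T)).comp_add_right T
  rw [hf.intervalIntegral_add_eq s t,
    ← intervalIntegral.integral_add_adjacent_intervals (hint t (t + T)) (hint _ _), hshift,
    intervalIntegral.integral_add (hint _ _) hint_shift]

section

variable {a b c : ℝ}

theorem sub_mul_cos_ne_zero (habc : a ^ 2 = b ^ 2 + c ^ 2) (hc : c ≠ 0) (θ : ℝ) :
    a - b * cos θ ≠ 0 := by
  intro h
  have hsum : c ^ 2 + (b * sin θ) ^ 2 = 0 := by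
    linear_combination (a + b * cos θ) * h - habc + b ^ 2 * sin_sq_add_cos_sq θ
  have : 0 < c ^ 2 := by positivity
  linarith [sq_nonneg (b * sin θ)]

theorem add_mul_cos_ne_zero (habc : a ^ 2 = b ^ 2 + c ^ 2) (hc : c ≠ 0) (θ : ℝ) :
    a + b * cos θ ≠ 0 := by
  simpa using sub_mul_cos_ne_zero (b := -b) (by rwa [neg_sq]) hc θ

theorem hasDerivAt_arctan_div_mul_sin (habc : a ^ 2 = b ^ 2 + c ^ 2) (hc : c ≠ 0) (θ : ℝ) :
    HasDerivAt (fun θ ↦ arctan (b / c * sin θ))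
      (b * c * cos θ / ((a - b * cos θ) * (a + b * cos θ))) θ := by
  have hsub := sub_mul_cos_ne_zero habc hc θ
  have hadd := add_mul_cos_ne_zero habc hc θ
  have hdenom : 1 + (b / c * sin θ) ^ 2 = (a - b * cos θ) * (a + b * cos θ) / c ^ 2 := by
    field_simp
    linear_combination b ^ 2 * sin_sq_add_cos_sq θ - habc
  refine ((hasDerivAt_sin θ).const_mul (b / c)).arctan.congr_deriv ?_
  rw [hdenom]
  field_simp

theorem integral_cos_div_sub_add_cos_div_add (habc : a ^ 2 = b ^ 2 + c ^ 2) (hb : b ≠ 0)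
    (hc : c ≠ 0) (α β : ℝ) :
    ∫ θ in α..β, (cos θ / (a - b * cos θ) + cos θ / (a + b * cos θ)) =
      2 * a / (b * c) * (arctan (b / c * sin β) - arctan (b / c * sin α)) := by
  have hsub := sub_mul_cos_ne_zero habc hc
  have hadd := add_mul_cos_ne_zero habc hc
  have hcont : Continuous fun θ ↦ cos θ / (a - b * cos θ) + cos θ / (a + b * cos θ) := by
    fun_prop (disch := assumption)
  have hderiv (θ : ℝ) : HasDerivAt (fun θ ↦ 2 * a / (b * c) * arctan (b / c * sin θ))
      (cos θ / (a - b * cos θ) + cos θ / (a + b * cos θ)) θ := by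
    refine ((hasDerivAt_arctan_div_mul_sin habc hc θ).const_mul _).congr_deriv ?_
    rw [div_add_div _ _ (hsub θ) (hadd θ)]
    field_simp
    ring
  rw [intervalIntegral.integral_eq_sub_of_hasDerivAt (fun θ _ ↦ hderiv θ)
    (hcont.intervalIntegrable α β), mul_sub]

theorem integral_abs_cos_div_sub_mul_cos (habc : a ^ 2 = b ^ 2 + c ^ 2) (hb : b ≠ 0)
    (hc : c ≠ 0) :
    ∫ θ in -π..π, |cos θ| / (a - b * cos θ) = 4 * a / (b * c) * arctan (b / c) := by
  set f : ℝ → ℝ := fun θ ↦ |cos θ| / (a - b * cos θ) with hf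
  have hcont : Continuous f := by
    have := sub_mul_cos_ne_zero habc hc
    fun_prop (disch := assumption)
  have hperiodic : Function.Periodic f (2 * π) := fun θ ↦ by simp only [hf, cos_add_two_pi]
  have hfold : ∫ θ in -π..π, f θ = ∫ θ in -(π / 2)..π / 2, (f θ + f (θ + π)) := by
    convert intervalIntegral_eq_integral_add_shift_of_periodic hperiodic
      (fun _ _ ↦ hcont.intervalIntegrable _ _) (-π) (-(π / 2)) using 2 <;> ring
  have hcos : Set.EqOn (fun θ ↦ f θ + f (θ + π))
      (fun θ ↦ cos θ / (a - b * cos θ) + cos θ / (a + b * cos θ))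
      (Set.uIcc (-(π / 2)) (π / 2)) := fun θ hθ ↦ by
    rw [Set.uIcc_of_le (by linarith [pi_pos])] at hθ
    simp only [hf, cos_add_pi, abs_neg, mul_neg, sub_neg_eq_add,
      abs_of_nonneg (cos_nonneg_of_mem_Icc hθ)]
  rw [hfold, intervalIntegral.integral_congr hcos, integral_cos_div_sub_add_cos_div_add habc hb hc,
    sin_neg, sin_pi_div_two, mul_neg, mul_one, arctan_neg]
  ring

end

theorem stmt_9_general {r R : ℝ} (hr : r ≠ 0) (hR : R ≠ 0) (hrR : r ^ 2 ≠ R ^ 2) :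
    ∫ θ in -π..π, |cos θ| / (R ^ 2 + r ^ 2 - 2 * r * R * cos θ) =
      2 * (R ^ 2 + r ^ 2) / (r * R * (R ^ 2 - r ^ 2)) * arctan (2 * r * R / (R ^ 2 - r ^ 2)) := by
  have hsq : R ^ 2 - r ^ 2 ≠ 0 := sub_ne_zero.2 hrR.symm
  rw [integral_abs_cos_div_sub_mul_cos (c := R ^ 2 - r ^ 2) (by ring) (by positivity) hsq]
  field_simp
  ring

/-- For `0 < r < R`,
`∫_{-π}^{π} |cos θ| / (R² + r² - 2rR cos θ) dθ
  = (2(R²+r²))/(rR(R²-r²)) · arctan(2rR/(R²-r²))`. -/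
theorem stmt_9 (r R : ℝ) (hr : 0 < r) (hrR : r < R) :
    ∫ θ in (-Real.pi)..Real.pi,
        |Real.cos θ| / (R ^ 2 + r ^ 2 - 2 * r * R * Real.cos θ) =
      2 * (R ^ 2 + r ^ 2) / (r * R * (R ^ 2 - r ^ 2)) *
        Real.arctan (2 * r * R / (R ^ 2 - r ^ 2)) :=
  stmt_9_general hr.ne' (hr.trans hrR).ne' (pow_lt_pow_left₀ hrR hr.le two_ne_zero).ne
end
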